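/- Let G = (V,E) be a Δ-regular finite simple graph, let τ ∈ (0,1), let A be a set of agents with |A| = |V| partitioned into k ≥ 2 types, and consider the one-versus-all swap Schelling game (1-k-SSG) with bijective placements. Then the function Φ(p) = (1/2)·∑_{a∈A} |N⁻_p(a)| (equal to the number of edges of G whose two endpoints are occupied by agents of different types under p) strictly decreases by at least 1 with every improving swap; consequently every sequence of improving swaps has length at most |E|, and improving response dynamics always reach a swap-stable placement in O(|E|) moves. -/

import Mathlib

open Finset
open scoped Classical

noncomputable section

namespace Schelling

variable {V A : Type*} [Fintype V] [Fintype A] {k : ℕ}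

/-- The set of neighbors of agent `a` under placement `p`. -/
def nbrs (G : SimpleGraph V) (p : A → V) (a : A) : Finset A :=
  Finset.univ.filter fun b => G.Adj (p a) (p b)

/-- `|N⁺_p(a)|`: the number of neighbors of `a` under `p` having the same type as `a`. -/
def posCount (G : SimpleGraph V) (t : A → Fin k) (p : A → V) (a : A) : ℕ :=
  (Finset.univ.filter fun b => G.Adj (p a) (p b) ∧ t b = t a).card

/-- One-versus-all `|N⁻_p(a)|`: the number of neighbors of `a` whose type differs from `t a`. -/
def negCountAll (G : SimpleGraph V) (t : A → Fin k) (p : A → V) (a : A) : ℕ :=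
  (Finset.univ.filter fun b => G.Adj (p a) (p b) ∧ t b ≠ t a).card

/-- One-versus-one `|N⁻_p(a)|`: the size of a largest set of neighbors of `a`
of one common type different from `t a`. -/
def negCountOne (G : SimpleGraph V) (t : A → Fin k) (p : A → V) (a : A) : ℕ :=
  (Finset.univ.filter fun T : Fin k => T ≠ t a).sup fun T =>
    (Finset.univ.filter fun b => G.Adj (p a) (p b) ∧ t b = T).card

/-- The cost of agent `a` in the one-versus-all version. -/
def costAll (G : SimpleGraph V) (t : A → Fin k) (τ : ℝ) (p : A → V) (a : A) : ℝ :=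
  if nbrs G p a = ∅ then τ
  else max 0 (τ - (posCount G t p a : ℝ) /
    ((posCount G t p a : ℝ) + (negCountAll G t p a : ℝ)))

/-- The cost of agent `a` in the one-versus-one version. -/
def costOne (G : SimpleGraph V) (t : A → Fin k) (τ : ℝ) (p : A → V) (a : A) : ℝ :=
  if nbrs G p a = ∅ then τ
  else max 0 (τ - (posCount G t p a : ℝ) /
    ((posCount G t p a : ℝ) + (negCountOne G t p a : ℝ)))

/-- A swap of the (distinct) agents `a` and `b` turning placement `p` into `q`,
which strictly decreases the cost of both agents (cost function `c`). -/
def SwapMove (c : (A → V) → A → ℝ) (p q : A → V) (a b : A) : Prop :=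
  a ≠ b ∧ q = p ∘ (Equiv.swap a b) ∧ c q a < c p a ∧ c q b < c p b

/-- `q` is obtained from `p` by an improving swap. -/
def ImprovingSwap (c : (A → V) → A → ℝ) (p q : A → V) : Prop :=
  ∃ a b, SwapMove c p q a b

/-- A placement is swap-stable if it admits no improving swap. -/
def SwapStable (c : (A → V) → A → ℝ) (p : A → V) : Prop :=
  ∀ q, ¬ ImprovingSwap c p q

/-- Some finite sequence of improving swaps starting at `p₀` ends in a swap-stable placement. -/
def ReachesStableSwap (c : (A → V) → A → ℝ) (p₀ : A → V) : Prop :=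
  ∃ (n : ℕ) (q : ℕ → A → V), q 0 = p₀ ∧
    (∀ i < n, ImprovingSwap c (q i) (q (i + 1))) ∧ SwapStable c (q n)

/-- A jump of agent `a` to the node `v` (unoccupied under `p`) turning placement `p`
into `q`, which strictly decreases the cost of `a` (cost function `c`). -/
def JumpMove (c : (A → V) → A → ℝ) (p q : A → V) (a : A) (v : V) : Prop :=
  (∀ b, p b ≠ v) ∧ q = Function.update p a v ∧ c q a < c p a

/-- `q` is obtained from `p` by an improving jump. -/
def ImprovingJump (c : (A → V) → A → ℝ) (p q : A → V) : Prop :=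
  ∃ a v, JumpMove c p q a v

/-- A placement is jump-stable if it admits no improving jump. -/
def JumpStable (c : (A → V) → A → ℝ) (p : A → V) : Prop :=
  ∀ q, ¬ ImprovingJump c p q

/-- Some finite sequence of improving jumps starting at `p₀` ends in a jump-stable placement. -/
def ReachesStableJump (c : (A → V) → A → ℝ) (p₀ : A → V) : Prop :=
  ∃ (n : ℕ) (q : ℕ → A → V), q 0 = p₀ ∧
    (∀ i < n, ImprovingJump c (q i) (q (i + 1))) ∧ JumpStable c (q n)

/-- The placement cost: the number of discontent agents (one-versus-all cost). -/
def placementCost (G : SimpleGraph V) (t : A → Fin k) (τ : ℝ) (p : A → V) : ℕ :=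
  (Finset.univ.filter fun a => costAll G t τ p a ≠ 0).card

/-- A graph is `Δ`-regular if every node has exactly `Δ` neighbors. -/
def IsRegular (G : SimpleGraph V) (Δ : ℕ) : Prop :=
  ∀ v : V, (Finset.univ.filter fun u => G.Adj v u).card = Δ

/-- The potential `Φ(p) = (1/2) ∑_{a ∈ A} |N⁻_p(a)|` (one-versus-all version). -/
def PhiSwap (G : SimpleGraph V) (t : A → Fin k) (p : A → V) : ℝ :=
  (∑ a : A, (negCountAll G t p a : ℝ)) / 2

/-- An edge whose two endpoints are occupied by agents of different types under `p`. -/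
def DiffEdge (t : A → Fin k) (p : A → V) (e : Sym2 V) : Prop :=
  ∃ a b : A, t a ≠ t b ∧ e = s(p a, p b)

lemma pos_add_neg (G : SimpleGraph V) (Δ : ℕ) (hreg : IsRegular G Δ) (t : A → Fin k)
    (p : A → V) (hp : Function.Bijective p) (a : A) :
    posCount G t p a + negCountAll G t p a = Δ := by
  have h1 : (nbrs G p a).card = Δ := by
    rw [← hreg (p a)]
    refine Finset.card_bij (fun b _ => p b) ?_ ?_ ?_
    · intro b hb
      simpa [nbrs] using hb
    · intro b _ c _ h
      exact hp.1 h
    · intro v hv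
      obtain ⟨b, rfl⟩ := hp.2 v
      exact ⟨b, by simpa [nbrs] using hv, rfl⟩
  rw [← h1, ← Finset.card_filter_add_card_filter_not (s := nbrs G p a) (fun b => t b = t a)]
  simp only [nbrs, Finset.filter_filter, posCount, negCountAll, ne_eq]

lemma nbrs_card (G : SimpleGraph V) (t : A → Fin k) (p : A → V) (a : A) :
    (nbrs G p a).card = posCount G t p a + negCountAll G t p a := by
  rw [← Finset.card_filter_add_card_filter_not (s := nbrs G p a) (fun b => t b = t a)]
  simp only [nbrs, Finset.filter_filter, posCount, negCountAll, ne_eq]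

lemma cost_eq (G : SimpleGraph V) (Δ : ℕ) (hreg : IsRegular G Δ) (t : A → Fin k) (τ : ℝ)
    (hτ : 0 < τ) (p : A → V) (hp : Function.Bijective p) (a : A) :
    costAll G t τ p a = max 0 (τ - (posCount G t p a : ℝ) / Δ) := by
  have h := pos_add_neg G Δ hreg t p hp a
  have h2 := nbrs_card G t p a
  unfold costAll
  split_ifs with h0
  · rw [h0, Finset.card_empty] at h2
    have : posCount G t p a = 0 := by omega
    rw [this]
    simp [hτ.le]
  · rw [← h]
    push_cast
    rfl

lemma pos_lt_of_cost (G : SimpleGraph V) (Δ : ℕ) (hreg : IsRegular G Δ) (t : A → Fin k) (τ : ℝ)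
    (hτ : 0 < τ) (p q : A → V) (hp : Function.Bijective p) (hq : Function.Bijective q) (a b : A)
    (h : costAll G t τ q a < costAll G t τ p b) :
    posCount G t p b < posCount G t q a := by
  rw [cost_eq G Δ hreg t τ hτ p hp, cost_eq G Δ hreg t τ hτ q hq] at h
  by_contra hc
  push Not at hc
  have : (posCount G t q a : ℝ) / Δ ≤ (posCount G t p b : ℝ) / Δ := by
    gcongr
  have h3 : max 0 (τ - (posCount G t p b : ℝ) / Δ) ≤ max 0 (τ - (posCount G t q a : ℝ) / Δ) :=
    max_le_max le_rfl (by linarith)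
  linarith

lemma pos_swap_same (G : SimpleGraph V) (t : A → Fin k) (p : A → V) (a b : A) (hab : t a = t b) :
    posCount G t (p ∘ Equiv.swap a b) a = posCount G t p b := by
  have hσ : ∀ c, t (Equiv.swap a b c) = t c := by
    intro c
    rw [Equiv.swap_apply_def]
    split_ifs with h1 h2
    · rw [h1, hab]
    · rw [h2, hab]
    · rfl
  unfold posCount
  refine Finset.card_bij (fun c _ => Equiv.swap a b c) ?_ ?_ ?_
  · intro c hc
    simpa [hσ, hab] using hc
  · intro c _ d _ h
    exact (Equiv.swap a b).injective h
  · intro c hc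
    exact ⟨Equiv.swap a b c, by simpa [hσ, hab] using hc, by simp⟩

lemma sum_split (F : A → A → ℝ) (hs : ∀ x y, F x y = F y x) (a b : A) (hne : a ≠ b)
    (haa : F a a = 0) (hbb : F b b = 0) (hab : F a b = 0) :
    ∑ x, ∑ y, F x y = 2 * ∑ y, F a y + 2 * ∑ y, F b y +
      ∑ x ∈ (univ.erase a).erase b, ∑ y ∈ (univ.erase a).erase b, F x y := by
  have key : ∀ f : A → ℝ, ∑ x, f x = f a + f b + ∑ x ∈ (univ.erase a).erase b, f x := by
    intro f
    rw [← Finset.add_sum_erase univ f (Finset.mem_univ a),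
      ← Finset.add_sum_erase (univ.erase a) f (a := b) (by simp [hne.symm])]
    ring
  rw [key (fun x => ∑ y, F x y)]
  have h2 : ∀ x, ∑ y, F x y = F a x + F b x + ∑ y ∈ (univ.erase a).erase b, F x y := by
    intro x
    rw [key, hs x a, hs x b]
  rw [Finset.sum_congr rfl (fun x _ => h2 x), Finset.sum_add_distrib, Finset.sum_add_distrib]
  have h3 := key (F a)
  have h4 := key (F b)
  rw [hs b a] at h4
  linarith

lemma pos_sum (G : SimpleGraph V) (t : A → Fin k) (p : A → V) (a : A) :
    (posCount G t p a : ℝ) = ∑ y, if G.Adj (p a) (p y) ∧ t y = t a then (1 : ℝ) else 0 := by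
  rw [Finset.sum_boole]
  rfl

lemma sum_pos (G : SimpleGraph V) (t : A → Fin k) (p : A → V) (a b : A) (hab : t a ≠ t b) :
    ∑ x, (posCount G t p x : ℝ) = 2 * posCount G t p a + 2 * posCount G t p b +
      ∑ x ∈ (univ.erase a).erase b, ∑ y ∈ (univ.erase a).erase b,
        if G.Adj (p x) (p y) ∧ t y = t x then (1 : ℝ) else 0 := by
  simp only [pos_sum]
  refine sum_split (fun x y => if G.Adj (p x) (p y) ∧ t y = t x then (1 : ℝ) else 0)
    ?_ a b ?_ ?_ ?_ ?_
  · intro x y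
    simp only [G.adj_comm (p x), eq_comm (a := t y)]
  · rintro rfl
    exact hab rfl
  · simp
  · simp
  · simp [hab.symm]

lemma phi_step (G : SimpleGraph V) (Δ : ℕ) (hreg : IsRegular G Δ) (t : A → Fin k) (τ : ℝ)
    (hτ : 0 < τ) (p q : A → V) (hp : Function.Bijective p)
    (h : ImprovingSwap (costAll G t τ) p q) :
    Function.Bijective q ∧ PhiSwap G t q + 1 ≤ PhiSwap G t p := by
  obtain ⟨a, b, hne, rfl, ha, hb⟩ := h
  have hq : Function.Bijective (p ∘ Equiv.swap a b) := hp.comp (Equiv.swap a b).bijective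
  refine ⟨hq, ?_⟩
  have h1 := pos_lt_of_cost G Δ hreg t τ hτ p _ hp hq a a ha
  have h2 := pos_lt_of_cost G Δ hreg t τ hτ p _ hp hq b b hb
  by_cases hab : t a = t b
  · exfalso
    rw [pos_swap_same G t p a b hab] at h1
    rw [Equiv.swap_comm, pos_swap_same G t p b a hab.symm] at h2
    omega
  have hphi : ∀ r : A → V, Function.Bijective r →
      PhiSwap G t r = (∑ _x : A, (Δ : ℝ) - ∑ x, (posCount G t r x : ℝ)) / 2 := by
    intro r hr
    unfold PhiSwap
    rw [← Finset.sum_sub_distrib]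
    congr 1
    refine Finset.sum_congr rfl fun x _ => ?_
    have := pos_add_neg G Δ hreg t r hr x
    rw [← this]
    push_cast
    ring
  rw [hphi p hp, hphi _ hq, sum_pos G t p a b hab, sum_pos G t (p ∘ Equiv.swap a b) a b hab]
  have hR : ∑ x ∈ (univ.erase a).erase b, ∑ y ∈ (univ.erase a).erase b,
        (if G.Adj ((p ∘ Equiv.swap a b) x) ((p ∘ Equiv.swap a b) y) ∧ t y = t x
          then (1 : ℝ) else 0) =
      ∑ x ∈ (univ.erase a).erase b, ∑ y ∈ (univ.erase a).erase b,
        (if G.Adj (p x) (p y) ∧ t y = t x then (1 : ℝ) else 0) := by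
    refine Finset.sum_congr rfl fun x hx => Finset.sum_congr rfl fun y hy => ?_
    simp only [Finset.mem_erase, Finset.mem_univ, and_true] at hx hy
    simp only [Function.comp_apply, Equiv.swap_apply_of_ne_of_ne hx.2 hx.1,
      Equiv.swap_apply_of_ne_of_ne hy.2 hy.1]
  rw [hR]
  have h1' : (posCount G t p a : ℝ) + 1 ≤ posCount G t (p ∘ Equiv.swap a b) a := by
    exact_mod_cast h1
  have h2' : (posCount G t p b : ℝ) + 1 ≤ posCount G t (p ∘ Equiv.swap a b) b := by
    exact_mod_cast h2
  linarith

lemma phi_eq (G : SimpleGraph V) (t : A → Fin k) (p : A → V) (hp : Function.Bijective p) :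
    PhiSwap G t p = (({e ∈ G.edgeSet | DiffEdge t p e}).ncard : ℝ) := by
  let H : SimpleGraph A :=
    { Adj := fun x y => G.Adj (p x) (p y) ∧ t y ≠ t x
      symm := ⟨fun x y h => ⟨h.1.symm, h.2.symm⟩⟩
      loopless := ⟨fun x h => h.2 rfl⟩ }
  have himg : {e ∈ G.edgeSet | DiffEdge t p e} = Sym2.map p '' H.edgeSet := by
    ext e
    constructor
    · rintro ⟨he, a, b, hab, rfl⟩
      exact ⟨s(a, b), ⟨he, hab.symm⟩, rfl⟩
    · rintro ⟨e', he', rfl⟩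
      induction e' using Sym2.ind with
      | _ a b =>
        exact ⟨he'.1, a, b, fun h => he'.2 h.symm, rfl⟩
  rw [himg, Set.ncard_image_of_injective _ (Sym2.map.injective hp.1)]
  have h := H.sum_degrees_eq_twice_card_edges
  have hc : H.edgeSet.ncard = H.edgeFinset.card := by
    rw [← SimpleGraph.coe_edgeFinset, Set.ncard_coe_finset]
  have hd : ∀ a, H.degree a = negCountAll G t p a := by
    intro a
    unfold negCountAll
    rw [← SimpleGraph.card_neighborFinset_eq_degree]
    congr 1
    ext b
    simp [H]
  simp only [hd] at h
  unfold PhiSwap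
  rw [hc]
  have h' : (∑ a, (negCountAll G t p a : ℝ)) = 2 * (H.edgeFinset.card : ℝ) := by
    exact_mod_cast h
  rw [h']
  ring

lemma seq_len (G : SimpleGraph V) (Δ : ℕ) (hreg : IsRegular G Δ) (t : A → Fin k) (τ : ℝ)
    (hτ : 0 < τ) (n : ℕ) (seq : ℕ → A → V) (h0 : Function.Bijective (seq 0))
    (hs : ∀ i < n, ImprovingSwap (costAll G t τ) (seq i) (seq (i + 1))) :
    n ≤ G.edgeSet.ncard := by
  have key : ∀ i ≤ n, Function.Bijective (seq i) ∧
      PhiSwap G t (seq i) + i ≤ PhiSwap G t (seq 0) := by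
    intro i
    induction i with
    | zero => intro _; exact ⟨h0, by simp⟩
    | succ i ih =>
      intro hi
      obtain ⟨hb, hphi⟩ := ih (by omega)
      obtain ⟨h1, h2⟩ := phi_step G Δ hreg t τ hτ _ _ hb (hs i (by omega))
      refine ⟨h1, ?_⟩
      push_cast
      linarith
  have h1 := (key n le_rfl).2
  have h2 : 0 ≤ PhiSwap G t (seq n) := by
    unfold PhiSwap
    positivity
  have h3 := phi_eq G t (seq 0) h0
  have h4 : ({e ∈ G.edgeSet | DiffEdge t (seq 0) e}).ncard ≤ G.edgeSet.ncard :=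
    Set.ncard_le_ncard (fun e he => he.1) (Set.toFinite _)
  have h5 : (({e ∈ G.edgeSet | DiffEdge t (seq 0) e}).ncard : ℝ) ≤ G.edgeSet.ncard := by
    exact_mod_cast h4
  have : (n : ℝ) ≤ G.edgeSet.ncard := by linarith
  exact_mod_cast this

lemma reaches (c : (A → V) → A → ℝ) (p₀ : A → V) (N : ℕ)
    (h : ∀ (n : ℕ) (seq : ℕ → A → V), seq 0 = p₀ →
      (∀ i < n, ImprovingSwap c (seq i) (seq (i + 1))) → n ≤ N) :
    ReachesStableSwap c p₀ := by
  let step : (A → V) → (A → V) := fun p =>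
    if hq : ∃ q, ImprovingSwap c p q then hq.choose else p
  have hstep : ∀ p, ¬ SwapStable c p → ImprovingSwap c p (step p) := by
    intro p hp
    have hq : ∃ q, ImprovingSwap c p q := by
      simpa [SwapStable] using hp
    simp only [step, dif_pos hq]
    exact hq.choose_spec
  let seq : ℕ → A → V := fun n => step^[n] p₀
  have hseq : ∀ n, seq (n + 1) = step (seq n) := fun n => Function.iterate_succ_apply' step n p₀
  have hex : ∃ n, SwapStable c (seq n) := by
    by_contra hc
    push Not at hc
    have := h (N + 1) seq rfl (fun i _ => by rw [hseq]; exact hstep _ (hc i))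
    omega
  exact ⟨Nat.find hex, seq, rfl,
    fun i hi => by rw [hseq]; exact hstep _ (Nat.find_min hex hi), Nat.find_spec hex⟩

/-- On a `Δ`-regular graph, for the `1`-`k`-SSG, `Φ(p) = (1/2)∑_a |N⁻_p(a)|` equals the
number of bichromatic edges, strictly decreases by at least `1` with every improving swap,
every sequence of improving swaps has length at most `|E|`, and IRD always reach a
swap-stable placement. -/
theorem statement1 {V A : Type*} [Fintype V] [Fintype A] {k : ℕ}
    (G : SimpleGraph V) (Δ : ℕ) (hreg : IsRegular G Δ)
    (hk : 2 ≤ k) (t : A → Fin k) (ht : Function.Surjective t)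
    (hcard : Fintype.card A = Fintype.card V)
    (τ : ℝ) (hτ0 : 0 < τ) (hτ1 : τ < 1) :
    (∀ p : A → V, Function.Bijective p →
        PhiSwap G t p = (({e ∈ G.edgeSet | DiffEdge t p e}).ncard : ℝ)) ∧
    (∀ p q : A → V, Function.Bijective p → ImprovingSwap (costAll G t τ) p q →
        PhiSwap G t q + 1 ≤ PhiSwap G t p) ∧
    (∀ (n : ℕ) (seq : ℕ → A → V), Function.Bijective (seq 0) →
        (∀ i < n, ImprovingSwap (costAll G t τ) (seq i) (seq (i + 1))) →
        n ≤ G.edgeSet.ncard) ∧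
    (∀ p₀ : A → V, Function.Bijective p₀ → ReachesStableSwap (costAll G t τ) p₀) := by
  refine ⟨fun p hp => phi_eq G t p hp,
    fun p q hp h => (phi_step G Δ hreg t τ hτ0 p q hp h).2,
    fun n seq h0 hs => seq_len G Δ hreg t τ hτ0 n seq h0 hs,
    fun p₀ hp => reaches _ p₀ G.edgeSet.ncard fun n seq h0 hs =>
      seq_len G Δ hreg t τ hτ0 n seq (h0 ▸ hp) hs⟩

end Schelling
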